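/- Let Ω be a finite nonempty set, t ∈ [1/2, 1), μ a probability measure on Ω, and σ a selection function on Ω that μ represents for threshold t. Then σ satisfies: (β) for all X ⊆ Y ⊆ Ω and x, y ∈ σ(X), if x ∈ σ(Y) then y ∈ σ(Y); (WIIA) for all X ⊆ Y ⊆ Ω, if σ(Y)∩X ≠ ∅ then σ(X) ⊆ σ(Y); and (Aizerman) for all Y ⊆ X ⊆ Ω, if σ(X) ⊆ Y then σ(Y) ⊆ σ(X). -/

import Mathlib

open Finset

variable {Ω : Type*}

/-- The measure of a finite set of states given weights `w`: `μ(A) = ∑_{ω ∈ A} w ω`. -/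
noncomputable def mea (w : Ω → ℝ) (A : Finset Ω) : ℝ := ∑ ω ∈ A, w ω

/-- `w` is a probability weight function: nonnegative and summing to 1. -/
def IsProbWeight [Fintype Ω] (w : Ω → ℝ) : Prop :=
  (∀ ω, 0 ≤ w ω) ∧ (∑ ω, w ω) = 1

/-- The measure is regular: only the empty set has measure 0. -/
def RegularW (w : Ω → ℝ) : Prop := ∀ X : Finset Ω, mea w X = 0 → X = ∅

/-- Conditional measure `μ_A(X) = μ(A ∩ X) / μ(A)`. -/
noncomputable def condMea [DecidableEq Ω] (w : Ω → ℝ) (A X : Finset Ω) : ℝ := mea w (A ∩ X) / mea w A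

/-- `X` is `(m,t)`-stable for a set function `m`: `X` is nonempty and for every `E` with
`X ∩ E ≠ ∅` and `m E > 0`, `m (X ∩ E) / m E > t`. -/
def StableFor [DecidableEq Ω] (m : Finset Ω → ℝ) (t : ℝ) (X : Finset Ω) : Prop :=
  X.Nonempty ∧ ∀ E : Finset Ω, (X ∩ E).Nonempty → 0 < m E → t < m (X ∩ E) / m E

/-- `S` is the `⊆`-least `(m,t)`-stable set. -/
def IsLeastStable [DecidableEq Ω] (m : Finset Ω → ℝ) (t : ℝ) (S : Finset Ω) : Prop :=
  StableFor m t S ∧ ∀ X : Finset Ω, StableFor m t X → S ⊆ X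

/-- `w` represents the selection function `σ` for threshold `t`. -/
def RepresentsAt [DecidableEq Ω] (w : Ω → ℝ) (t : ℝ) (σ : Finset Ω → Finset Ω) : Prop :=
  ∀ E : Finset Ω, (0 < mea w E → IsLeastStable (condMea w E) t (σ E)) ∧
    (mea w E = 0 → σ E = ∅)

/-- Selection axiom (S1): `σ(X) = ∅` only if `X = ∅`. -/
def SelA1 (σ : Finset Ω → Finset Ω) : Prop := ∀ X : Finset Ω, σ X = ∅ → X = ∅

/-- Selection axiom (S2): `σ(X) ⊆ X`. -/
def SelA2 (σ : Finset Ω → Finset Ω) : Prop := ∀ X : Finset Ω, σ X ⊆ X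

/-- Selection axiom (S3): if `σ(A) ∩ B ≠ ∅` then `σ(A ∩ B) ⊆ σ(A) ∩ B`. -/
def SelA3 [DecidableEq Ω] (σ : Finset Ω → Finset Ω) : Prop :=
  ∀ A B : Finset Ω, (σ A ∩ B).Nonempty → σ (A ∩ B) ⊆ σ A ∩ B

/-- Selection axiom (S4ₙ) for every `n`: if `σ(A ∪ Xᵢ) = Xᵢ` for all `i`, then
`σ(A ∪ ⋃ᵢ Xᵢ) ⊆ ⋃ᵢ Xᵢ`. -/
def SelA4 [DecidableEq Ω] (σ : Finset Ω → Finset Ω) : Prop :=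
  ∀ n : ℕ, ∀ A : Finset Ω, ∀ X : Fin (n + 1) → Finset Ω,
    (∀ i, σ (A ∪ X i) = X i) →
    σ (A ∪ univ.biUnion X) ⊆ univ.biUnion X

/-- `ω ≻_σ X` iff `ω ∉ X` and `σ (X ∪ {ω}) = {ω}`. -/
def succS [DecidableEq Ω] (σ : Finset Ω → Finset Ω) (ω : Ω) (X : Finset Ω) : Prop :=
  ω ∉ X ∧ σ (X ∪ {ω}) = {ω}

/-- `X ⪰_σ ω` iff `ω ∈ X` or `σ (X ∪ {ω}) ≠ {ω}`. -/
def succeqS [DecidableEq Ω] (σ : Finset Ω → Finset Ω) (X : Finset Ω) (ω : Ω) : Prop :=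
  ω ∈ X ∨ σ (X ∪ {ω}) ≠ {ω}

/-- `A ⪰*_σ B` iff either `A` is a singleton `{a}` with `a ≻_σ B`, or `B` is a singleton
`{b}` with `A ⪰_σ b`. -/
def geStar [DecidableEq Ω] (σ : Finset Ω → Finset Ω) (A B : Finset Ω) : Prop :=
  (∃ a, A = {a} ∧ succS σ a B) ∨ (∃ b, B = {b} ∧ succeqS σ A b)

/-- Two sequences of sets are balanced: every state occurs in exactly as many `A i`'s
as `B i`'s. -/
def BalancedSeq {n : ℕ} (A B : Fin n → Finset Ω) : Prop :=
  ∀ ω : Ω, Nat.card {i // ω ∈ A i} = Nat.card {i // ω ∈ B i}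

/-- `(A_i) ≤₀ (B_i)`: every state occurs in at most as many `A i`'s as `B i`'s. -/
def DomSeq {n : ℕ} (A B : Fin n → Finset Ω) : Prop :=
  ∀ ω : Ω, Nat.card {i // ω ∈ A i} ≤ Nat.card {i // ω ∈ B i}

/-- The (Scott) axiom for the induced order `⪰*_σ`. -/
def ScottAx [DecidableEq Ω] (σ : Finset Ω → Finset Ω) : Prop :=
  ∀ n : ℕ, ∀ A B : Fin (n + 1) → Finset Ω, BalancedSeq A B →
    (∀ i, geStar σ (A i) (B i)) → ∀ i, geStar σ (B i) (A i)

/-! Stability survives conditioning: if `S` is stable for `μ_Y` and meets `X ⊆ Y`, then `S ∩ X` is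
stable for `μ_X`, because the events that test `S ∩ X` against `μ_X` are the events `X ∩ E`, which
also test `S` against `μ_Y`. Leastness of `σ X` then gives `σ X ⊆ σ Y ∩ X`, which is (WIIA).
Both (β) and (Aizerman) reduce to (WIIA), since `σ X ⊆ X` and since `σ X` is nonempty when `X` has
positive measure. -/

section

variable {w : Ω → ℝ} {t : ℝ} {σ : Finset Ω → Finset Ω} {A S X Y : Finset Ω}

theorem mea_nonneg (hw : ∀ ω, 0 ≤ w ω) (A : Finset Ω) : 0 ≤ mea w A :=
  sum_nonneg fun ω _ => hw ω

theorem mea_mono (hw : ∀ ω, 0 ≤ w ω) (hXY : X ⊆ Y) : mea w X ≤ mea w Y :=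
  sum_le_sum_of_subset_of_nonneg hXY fun ω _ _ => hw ω

variable [DecidableEq Ω]

theorem stableFor_condMea_iff (hA : 0 < mea w A) :
    StableFor (condMea w A) t S ↔ S.Nonempty ∧ ∀ E : Finset Ω, (S ∩ E).Nonempty →
      0 < mea w (A ∩ E) → t * mea w (A ∩ E) < mea w (A ∩ (S ∩ E)) := by
  refine and_congr_right fun _ => forall_congr' fun E => imp_congr_right fun _ => ?_
  unfold condMea
  rw [div_pos_iff_of_pos_right hA]
  refine imp_congr_right fun hE => ?_
  rw [div_div_div_cancel_right₀ hA.ne', lt_div_iff₀ hE]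

theorem stableFor_condMea_self (ht : t < 1) (hA : 0 < mea w A) : StableFor (condMea w A) t A := by
  refine (stableFor_condMea_iff hA).2
    ⟨nonempty_of_sum_ne_zero hA.ne', fun E _ hE => ?_⟩
  rw [← inter_assoc, inter_self]
  exact mul_lt_of_lt_one_left hE ht

namespace StableFor

theorem threshold_lt_one (hw : ∀ ω, 0 ≤ w ω) (hA : 0 < mea w A)
    (hS : StableFor (condMea w A) t S) : t < 1 := by
  obtain ⟨⟨s, hs⟩, hstable⟩ := (stableFor_condMea_iff hA).1 hS
  -- Adjoining `s` to `A` gives an event of conditional measure one that meets `S`.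
  have hE : A ∩ insert s A = A := inter_eq_left.2 (subset_insert s A)
  have hlt : t * mea w A < mea w A := by
    have h := hstable (insert s A) ⟨s, mem_inter.2 ⟨hs, mem_insert_self s A⟩⟩ (by rwa [hE])
    rw [hE] at h
    exact h.trans_le (mea_mono hw inter_subset_left)
  exact (mul_lt_iff_lt_one_left hA).1 hlt

theorem condMea_inter (hXY : X ⊆ Y) (hX : 0 < mea w X) (hY : 0 < mea w Y)
    (hS : StableFor (condMea w Y) t S) (hne : (S ∩ X).Nonempty) :
    StableFor (condMea w X) t (S ∩ X) := by
  refine (stableFor_condMea_iff hX).2 ⟨hne, fun E hSE hE => ?_⟩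
  have hYE : Y ∩ (X ∩ E) = X ∩ E := inter_eq_right.2 (inter_subset_left.trans hXY)
  have hYSE : Y ∩ (S ∩ (X ∩ E)) = X ∩ (S ∩ X ∩ E) := by grind
  have h := ((stableFor_condMea_iff hY).1 hS).2 (X ∩ E) (by rwa [← inter_assoc]) (by rwa [hYE])
  rwa [hYE, hYSE] at h

end StableFor

namespace RepresentsAt

theorem mea_pos_of_mem (hrep : RepresentsAt w t σ) (hw : ∀ ω, 0 ≤ w ω) {x : Ω} (hx : x ∈ σ X) :
    0 < mea w X :=
  (mea_nonneg hw X).lt_of_ne' fun h => ne_empty_of_mem hx ((hrep X).2 h)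

theorem selected_subset (hrep : RepresentsAt w t σ) (hw : ∀ ω, 0 ≤ w ω) (X : Finset Ω) :
    σ X ⊆ X := by
  intro x hx
  have hX := hrep.mea_pos_of_mem hw hx
  obtain ⟨hstable, hleast⟩ := (hrep X).1 hX
  exact hleast X (stableFor_condMea_self (hstable.threshold_lt_one hw hX) hX) hx

theorem selected_subset_selected (hrep : RepresentsAt w t σ) (hw : ∀ ω, 0 ≤ w ω) (hXY : X ⊆ Y)
    (hne : (σ Y ∩ X).Nonempty) : σ X ⊆ σ Y := by
  intro x hx
  have hX := hrep.mea_pos_of_mem hw hx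
  have hY := hX.trans_le (mea_mono hw hXY)
  have hstable : StableFor (condMea w X) t (σ Y ∩ X) :=
    ((hrep Y).1 hY).1.condMea_inter hXY hX hY hne
  exact inter_subset_left (((hrep X).1 hX).2 _ hstable hx)

end RepresentsAt

end

theorem stmt18_general [DecidableEq Ω] {t : ℝ} {w : Ω → ℝ} (hw : ∀ ω, 0 ≤ w ω)
    {σ : Finset Ω → Finset Ω} (hrep : RepresentsAt w t σ) :
    (∀ X Y : Finset Ω, X ⊆ Y → ∀ x ∈ σ X, ∀ y ∈ σ X, x ∈ σ Y → y ∈ σ Y) ∧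
    (∀ X Y : Finset Ω, X ⊆ Y → (σ Y ∩ X).Nonempty → σ X ⊆ σ Y) ∧
    (∀ X Y : Finset Ω, Y ⊆ X → σ X ⊆ Y → σ Y ⊆ σ X) := by
  have wiia : ∀ X Y : Finset Ω, X ⊆ Y → (σ Y ∩ X).Nonempty → σ X ⊆ σ Y :=
    fun X Y hXY hne => hrep.selected_subset_selected hw hXY hne
  refine ⟨fun X Y hXY x hx y hy hxY => ?beta, wiia, fun X Y hYX hσX y hy => ?aizerman⟩
  case beta =>
    have hxX : x ∈ X := hrep.selected_subset hw X hx
    exact wiia X Y hXY ⟨x, mem_inter.2 ⟨hxY, hxX⟩⟩ hy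
  case aizerman =>
    have hX : 0 < mea w X := (hrep.mea_pos_of_mem hw hy).trans_le (mea_mono hw hYX)
    obtain ⟨x, hx⟩ : (σ X).Nonempty := ((hrep X).1 hX).1.1
    exact wiia Y X hYX ⟨x, mem_inter.2 ⟨hx, hσX hx⟩⟩ hy

/-- Observation `PROPalphabetaAizerman` and Proposition on (WIIA):
every representable selection function satisfies (β), (WIIA) and the Aizerman axiom. -/
theorem stmt18 [Fintype Ω] [DecidableEq Ω] [Nonempty Ω]
    (t : ℝ) (ht0 : 1 / 2 ≤ t) (ht1 : t < 1)
    (w : Ω → ℝ) (hw : IsProbWeight w)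
    (σ : Finset Ω → Finset Ω) (hrep : RepresentsAt w t σ) :
    (∀ X Y : Finset Ω, X ⊆ Y → ∀ x ∈ σ X, ∀ y ∈ σ X, x ∈ σ Y → y ∈ σ Y) ∧
    (∀ X Y : Finset Ω, X ⊆ Y → (σ Y ∩ X).Nonempty → σ X ⊆ σ Y) ∧
    (∀ X Y : Finset Ω, Y ⊆ X → σ X ⊆ Y → σ Y ⊆ σ X) :=
  stmt18_general hw.1 hrep
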